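/- Let g be a finite-dimensional real Lie algebra with a decreasing filtration (g_p)_{p∈ℤ} by subspaces such that g_p = g for all sufficiently negative p, [g_p, g_q] ⊆ g_{p+q} for all p, q, and ⋂_p g_p = 0. Suppose there exists ē ∈ g₀ such that for every p ∈ ℤ and every x ∈ g_p one has [ē, x] − p·x ∈ g_{p+1} (i.e., ad ē acts as multiplication by p on g_p/g_{p+1}). Then, setting g^p(ē) = {x ∈ g : [ē, x] = p·x}, one has g_p = g^p(ē) ⊕ g_{p+1} for every p ∈ ℤ; consequently g = ⊕_p g^p(ē), [g^i(ē), g^j(ē)] ⊆ g^{i+j}(ē), and g_p = ⊕_{q ≥ p} g^q(ē), so that g is isomorphic as a filtered Lie algebra to its associated graded Lie algebra. -/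

import Mathlib

section

variable {g : Type*} [LieRing g] [LieAlgebra ℝ g]

/-- The eigenspace `g^p(e) = {x ∈ g : [e, x] = p·x}` of `ad e`. -/
def eig (e : g) (p : ℤ) : Submodule ℝ g where
  carrier := {x | ⁅e, x⁆ = (p : ℝ) • x}
  add_mem' := fun {a b} ha hb => by
    simp only [Set.mem_setOf_eq] at *
    rw [lie_add, ha, hb, smul_add]
  zero_mem' := by simp
  smul_mem' := fun c x hx => by
    simp only [Set.mem_setOf_eq] at *
    rw [lie_smul, hx, smul_comm]

/-!
Put `D = ad ē` and `E^p = ker (D - p)`. If `x ∈ E^p` lies in `g_q` with `q ≠ p`, then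
`(p - q) x = [ē, x] - q x` lies in `g_{q+1}`, so an eigenvector can be pushed up the filtration
through every degree except its own. Starting far down this gives `E^p ⊆ g_p`, and starting at
`p + 1` it gives `E^p ∩ g_{p+1} ⊆ ⋂ g_q = 0`.

Conversely `g_p ⊆ ⨁_{q ≥ p} E^q` by descending induction on `p`, starting at a step `g_p = 0`, which
exists because a descending chain of subspaces stabilizes at its intersection. Now `D - p` maps
`g_p` into `g_{p+1} ⊆ ⨁_{q > p} E^q`, and it is invertible on that sum because `q - p ≠ 0`. Hence
every `x ∈ g_p` differs from an element of the sum by an element of `ker (D - p) = E^p`.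
-/

section WellFounded

variable {ι α : Type*} [Preorder ι] [IsDirectedOrder ι] [Nonempty ι] [CompleteLattice α]
  [WellFoundedLT α]

theorem exists_eq_iInf_of_antitone {F : ι → α} (hF : Antitone F) : ∃ i, F i = ⨅ j, F j := by
  obtain ⟨_, ⟨i, rfl⟩, hmin⟩ := wellFounded_lt.has_min (Set.range F) (Set.range_nonempty F)
  refine ⟨i, le_antisymm (le_iInf fun j => ?_) (iInf_le F i)⟩
  obtain ⟨k, hik, hjk⟩ := exists_ge_ge i j
  have hki : F k = F i := (hF hik).eq_of_not_lt (hmin _ ⟨k, rfl⟩)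
  exact hki.ge.trans (hF hjk)

end WellFounded

section Endomorphism

variable {R M : Type*} [CommRing R] [AddCommGroup M] [Module R M]

/-- The sum of the eigenspaces of `f` for the integral eigenvalues `q ≥ p`: the `p`-th step of the
filtration that the eigenspaces of `f` induce on `M`. -/
def eigenspacesGE (f : Module.End R M) (p : ℤ) : Submodule R M :=
  ⨆ q : ℤ, ⨆ _ : p ≤ q, f.eigenspace (q : R)

/-- `f` acts as multiplication by `p` on each quotient `F p / F (p + 1)` of the decreasing
filtration `F`. The condition is stated on representatives, which avoids forming the quotients. -/
def ActsByDegree (f : Module.End R M) (F : ℤ → Submodule R M) : Prop :=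
  ∀ p : ℤ, ∀ x ∈ F p, f x - (p : R) • x ∈ F (p + 1)

theorem eigenspacesGE_eq_sup (f : Module.End R M) (p : ℤ) :
    eigenspacesGE f p = f.eigenspace (p : R) ⊔ eigenspacesGE f (p + 1) :=
  biSup_ge_eq_sup _ p

variable {K V : Type*} [Field K] [AddCommGroup V] [Module K V]

theorem eigenspace_le_map_sub_smul_one (f : Module.End K V) {μ ν : K} (hμν : μ ≠ ν) :
    f.eigenspace ν ≤ (f.eigenspace ν).map (f - μ • 1) := by
  intro x hx
  have hfx : f x = ν • x := Module.End.mem_eigenspace_iff.mp hx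
  refine ⟨(ν - μ)⁻¹ • x, Submodule.smul_mem _ _ hx, ?_⟩
  rw [map_smul, LinearMap.sub_apply, LinearMap.smul_apply, Module.End.one_apply, hfx,
    ← sub_smul, inv_smul_smul₀ (sub_ne_zero.mpr hμν.symm)]

variable [CharZero K]

theorem eigenspacesGE_le_map_sub_smul_one (f : Module.End K V) {p r : ℤ} (hpr : p < r) :
    eigenspacesGE f r ≤ (eigenspacesGE f r).map (f - (p : K) • 1) := by
  simp only [eigenspacesGE, Submodule.map_iSup]
  exact iSup₂_mono fun q hq =>
    eigenspace_le_map_sub_smul_one f (Int.cast_injective.ne (hpr.trans_le hq).ne)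

namespace ActsByDegree

variable {f : Module.End K V} {F : ℤ → Submodule K V}

theorem mem_add_one_of_mem_eigenspace (hf : ActsByDegree f F) {p q : ℤ} (hpq : p ≠ q) {x : V}
    (hx : x ∈ f.eigenspace (p : K)) (hxq : x ∈ F q) : x ∈ F (q + 1) := by
  have hsmul : ((p : K) - q) • x ∈ F (q + 1) := by
    rw [sub_smul, ← Module.End.mem_eigenspace_iff.mp hx]
    exact hf q x hxq
  exact ((F (q + 1)).smul_mem_iff (sub_ne_zero.mpr (Int.cast_injective.ne hpq))).mp hsmul

theorem mem_of_mem_eigenspace (hf : ActsByDegree f F) {p m n : ℤ} (hmn : m ≤ n)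
    (hp : p ∉ Set.Ico m n) {x : V} (hx : x ∈ f.eigenspace (p : K)) (hxm : x ∈ F m) : x ∈ F n := by
  rw [Set.mem_Ico] at hp
  induction n, hmn using Int.leInduction with
  | base => exact hxm
  | succ n _ ih => exact hf.mem_add_one_of_mem_eigenspace (by lia) hx (ih (by lia))

theorem eigenspace_le (hf : ActsByDegree f F) (hanti : Antitone F) (hsup : ⨆ p, F p = ⊤)
    (p : ℤ) : f.eigenspace (p : K) ≤ F p := by
  intro x hx
  obtain ⟨N, hN⟩ : ∃ N, x ∈ F N :=
    (Submodule.mem_iSup_of_directed F hanti.directed_le).mp (hsup ▸ Submodule.mem_top)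
  rcases le_total p N with hpN | hNp
  · exact hanti hpN hN
  · exact hf.mem_of_mem_eigenspace hNp (by simp) hx hN

theorem disjoint_eigenspace (hf : ActsByDegree f F) (hanti : Antitone F) (hinf : ⨅ p, F p = ⊥)
    (p : ℤ) : Disjoint (f.eigenspace (p : K)) (F (p + 1)) := by
  rw [Submodule.disjoint_def]
  intro x hx hxp
  have hmem : x ∈ ⨅ q, F q := by
    refine (Submodule.mem_iInf F).mpr fun q => ?_
    rcases le_total (p + 1) q with hq | hq
    · exact hf.mem_of_mem_eigenspace hq (by simp) hx hxp
    · exact hanti hq hxp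
  rwa [hinf, Submodule.mem_bot] at hmem

theorem eigenspacesGE_le (hf : ActsByDegree f F) (hanti : Antitone F) (hsup : ⨆ p, F p = ⊤)
    (p : ℤ) : eigenspacesGE f p ≤ F p :=
  iSup₂_le fun q hq => (hf.eigenspace_le hanti hsup q).trans (hanti hq)

theorem le_eigenspacesGE_of_add_one (hf : ActsByDegree f F) {p : ℤ}
    (hp : F (p + 1) ≤ eigenspacesGE f (p + 1)) : F p ≤ eigenspacesGE f p := by
  have hmap : (F p).map (f - (p : K) • 1) ≤ F (p + 1) := by
    rintro _ ⟨x, hx, rfl⟩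
    exact hf p x hx
  have hle := (hmap.trans hp).trans (eigenspacesGE_le_map_sub_smul_one f (lt_add_one p))
  rwa [LinearMap.map_le_map_iff, ← Module.End.eigenspace_def, sup_comm,
    ← eigenspacesGE_eq_sup] at hle

theorem le_eigenspacesGE (hf : ActsByDegree f F) (hanti : Antitone F) (hbot : ∃ M, F M = ⊥)
    (p : ℤ) : F p ≤ eigenspacesGE f p := by
  obtain ⟨N, hN⟩ := hbot
  have base : ∀ n, N ≤ n → F n ≤ eigenspacesGE f n := fun n hn =>
    (hanti hn).trans (hN.le.trans bot_le)
  rcases le_total N p with hp | hp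
  · exact base p hp
  · induction p, hp using Int.leInductionDown with
    | base => exact base N le_rfl
    | pred n _ ih => exact hf.le_eigenspacesGE_of_add_one (by rwa [sub_add_cancel])

theorem eq_eigenspacesGE (hf : ActsByDegree f F) (hanti : Antitone F) (hsup : ⨆ p, F p = ⊤)
    (hbot : ∃ M, F M = ⊥) (p : ℤ) : F p = eigenspacesGE f p :=
  le_antisymm (hf.le_eigenspacesGE hanti hbot p) (hf.eigenspacesGE_le hanti hsup p)

theorem eq_eigenspace_sup (hf : ActsByDegree f F) (hanti : Antitone F) (hsup : ⨆ p, F p = ⊤)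
    (hbot : ∃ M, F M = ⊥) (p : ℤ) : F p = f.eigenspace (p : K) ⊔ F (p + 1) := by
  rw [hf.eq_eigenspacesGE hanti hsup hbot p, hf.eq_eigenspacesGE hanti hsup hbot (p + 1),
    eigenspacesGE_eq_sup]

theorem iSup_eigenspace_eq_top (hf : ActsByDegree f F) (hanti : Antitone F)
    (hsup : ⨆ p, F p = ⊤) (hbot : ∃ M, F M = ⊥) : ⨆ p : ℤ, f.eigenspace (p : K) = ⊤ := by
  rw [← top_le_iff, ← hsup]
  exact iSup_le fun p => (hf.le_eigenspacesGE hanti hbot p).trans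
    (iSup₂_le fun q _ => le_iSup (fun q : ℤ => f.eigenspace (q : K)) q)

end ActsByDegree

end Endomorphism

theorem lie_mem_eigenspace_toEnd {R L M : Type*} [CommRing R] [LieRing L] [LieAlgebra R L]
    [AddCommGroup M] [Module R M] [LieRingModule L M] [LieModule R L M] {e x : L} {m : M} {μ ν : R}
    (hx : x ∈ (LieAlgebra.ad R L e).eigenspace μ)
    (hm : m ∈ (LieModule.toEnd R L M e).eigenspace ν) :
    ⁅x, m⁆ ∈ (LieModule.toEnd R L M e).eigenspace (μ + ν) := by
  rw [Module.End.mem_eigenspace_iff] at hx hm ⊢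
  rw [LieAlgebra.ad_apply] at hx
  rw [LieModule.toEnd_apply_apply] at hm ⊢
  rw [leibniz_lie, hx, hm, smul_lie, lie_smul, add_smul]

theorem eig_eq_eigenspace_ad (e : g) (p : ℤ) :
    eig e p = (LieAlgebra.ad ℝ g e).eigenspace (p : ℝ) := by
  ext x
  exact (Module.End.mem_eigenspace_iff (f := LieAlgebra.ad ℝ g e)).symm

theorem stmt9_general {K L : Type*} [Field K] [CharZero K] [LieRing L] [LieAlgebra K L]
    {F : ℤ → Submodule K L} (hanti : Antitone F) (hsup : ⨆ p, F p = ⊤) (hbot : ∃ M, F M = ⊥)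
    {e : L} (he : ActsByDegree (LieAlgebra.ad K L e) F) :
    (∀ p : ℤ, F p = (LieAlgebra.ad K L e).eigenspace (p : K) ⊔ F (p + 1)) ∧
    (∀ p : ℤ, (LieAlgebra.ad K L e).eigenspace (p : K) ⊓ F (p + 1) = ⊥) ∧
    ((⨆ p : ℤ, (LieAlgebra.ad K L e).eigenspace (p : K)) = ⊤) ∧
    (∀ i j : ℤ, ∀ x ∈ (LieAlgebra.ad K L e).eigenspace (i : K),
      ∀ y ∈ (LieAlgebra.ad K L e).eigenspace (j : K),
        ⁅x, y⁆ ∈ (LieAlgebra.ad K L e).eigenspace ((i + j : ℤ) : K)) ∧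
    (∀ p : ℤ, F p = ⨆ q : ℤ, ⨆ _ : p ≤ q, (LieAlgebra.ad K L e).eigenspace (q : K)) := by
  have hinf : ⨅ p, F p = ⊥ := hbot.elim fun M hM => bot_unique ((iInf_le F M).trans hM.le)
  refine ⟨he.eq_eigenspace_sup hanti hsup hbot,
    fun p => (he.disjoint_eigenspace hanti hinf p).eq_bot,
    he.iSup_eigenspace_eq_top hanti hsup hbot, fun i j x hx y hy => ?_,
    he.eq_eigenspacesGE hanti hsup hbot⟩
  rw [Int.cast_add]
  exact lie_mem_eigenspace_toEnd hx hy

/-- Let `g` be a finite-dimensional real Lie algebra with a decreasing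
filtration `(g_p)` such that `g_p = g` for `p` sufficiently negative,
`[g_p, g_q] ⊆ g_{p+q}` and `⋂ g_p = 0`, and suppose `ē ∈ g₀` acts as multiplication by
`p` on each `g_p / g_{p+1}`.  Then with `g^p(ē) = {x : [ē,x] = p·x}` one has
`g_p = g^p(ē) ⊕ g_{p+1}` for all `p`; consequently `g = ⊕_p g^p(ē)`,
`[g^i(ē), g^j(ē)] ⊆ g^{i+j}(ē)` and `g_p = ⊕_{q ≥ p} g^q(ē)`, so `g` is isomorphic as a
filtered Lie algebra to its associated graded Lie algebra. -/
theorem stmt9 [FiniteDimensional ℝ g] (F : ℤ → Submodule ℝ g)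
    (hdec : ∀ p : ℤ, F (p + 1) ≤ F p)
    (hneg : ∃ N : ℤ, ∀ p ≤ N, F p = ⊤)
    (hbr : ∀ p q : ℤ, ∀ x ∈ F p, ∀ y ∈ F q, ⁅x, y⁆ ∈ F (p + q))
    (hint : (⨅ p : ℤ, F p) = ⊥)
    (e : g) (he : e ∈ F 0)
    (hgr : ∀ p : ℤ, ∀ x ∈ F p, ⁅e, x⁆ - (p : ℝ) • x ∈ F (p + 1)) :
    (∀ p : ℤ, F p = eig e p ⊔ F (p + 1)) ∧
    (∀ p : ℤ, eig e p ⊓ F (p + 1) = ⊥) ∧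
    ((⨆ p : ℤ, eig e p) = ⊤) ∧
    (∀ i j : ℤ, ∀ x ∈ eig e i, ∀ y ∈ eig e j, ⁅x, y⁆ ∈ eig e (i + j)) ∧
    (∀ p : ℤ, F p = ⨆ q : ℤ, ⨆ _ : p ≤ q, eig e q) := by
  have hanti : Antitone F := antitone_int_of_succ_le hdec
  have hsup : ⨆ p, F p = ⊤ :=
    hneg.elim fun N hN => top_unique ((hN N le_rfl).ge.trans (le_iSup F N))
  simpa only [eig_eq_eigenspace_ad] using
    stmt9_general hanti hsup (hint ▸ exists_eq_iInf_of_antitone hanti) hgr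

end
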